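/- Let A be a complex Banach algebra that is biflat with constant K ≥ 1, and let m ≥ 0. Then for every cyclic (2m+2)-cocycle ψ ∈ Z^{2m+2}_λ(A) there exist a cyclic cochain χ ∈ C^{2m+1}_λ(A) and a trace τ ∈ A* (i.e. τ ∈ Z⁰_λ(A)) such that ψ = τ^(2m+2) + δχ, with ‖τ‖ ≤ K^{2m+2}‖ψ‖ and ‖χ‖ ≤ 2(m+1)³ K^{4m+2} ‖ψ‖. -/

import Mathlib

/-- `Coch A n` is `Cⁿ(A)`: the Banach space of bounded `(n+1)`-multilinear
functionals on `A`.  In particular `Coch A 1` is the space of bounded bilinear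
functionals on `A × A`, i.e. the dual of the projective tensor product `A ⊗̂ A`. -/
abbrev Coch (A : Type*) [NonUnitalNormedRing A] [NormedSpace ℂ A] (n : ℕ) :=
  ContinuousMultilinearMap ℂ (fun _ : Fin (n + 1) => A) ℂ

variable {A : Type*} [NonUnitalNormedRing A] [NormedSpace ℂ A]

/-- The `j`-th face `(a₀, …, aⱼaⱼ₊₁, …, a_{n+1})` of a tuple. -/
def hochFace {n : ℕ} (a : Fin (n + 2) → A) (j : Fin (n + 1)) : Fin (n + 1) → A :=
  fun i =>
    if (i : ℕ) < (j : ℕ) then a i.castSucc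
    else if (i : ℕ) = (j : ℕ) then a i.castSucc * a i.succ
    else a i.succ

/-- The truncated Hochschild coboundary `δ'`. -/
noncomputable def hochDelta' (n : ℕ) (φ : (Fin (n + 1) → A) → ℂ) :
    (Fin (n + 2) → A) → ℂ :=
  fun a => ∑ j : Fin (n + 1), (-1 : ℂ) ^ (j : ℕ) * φ (hochFace a j)

/-- The Hochschild coboundary `δ`. -/
noncomputable def hochDelta (n : ℕ) (φ : (Fin (n + 1) → A) → ℂ) :
    (Fin (n + 2) → A) → ℂ :=
  fun a => hochDelta' n φ a +
    (-1 : ℂ) ^ (n + 1) *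
      φ (fun i => if i = 0 then a (Fin.last (n + 1)) * a 0 else a i.castSucc)

/-- The signed cyclic shift `t`: `tψ(a₀,…,aₙ) = (−1)ⁿ ψ(aₙ,a₀,…,a_{n−1})`. -/
noncomputable def cycT (n : ℕ) (φ : (Fin (n + 1) → A) → ℂ) :
    (Fin (n + 1) → A) → ℂ :=
  fun a => (-1 : ℂ) ^ n * φ (fun i => a (i - 1))

/-- `A` is biflat with constant `K`: there is a bounded linear `A`-bimodule map
`ρ` from the bounded bilinear functionals on `A × A` to `A*`, of norm `≤ K`,
which is a left inverse to `π*`, where `π(a ⊗ b) = ab`. -/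
def IsBiflat (A : Type*) [NonUnitalNormedRing A] [NormedSpace ℂ A] (K : ℝ) : Prop :=
  ∃ ρ : Coch A 1 →L[ℂ] (A →L[ℂ] ℂ),
    ‖ρ‖ ≤ K ∧
    (∀ (f : A →L[ℂ] ℂ) (Ψ : Coch A 1),
      (∀ x y, Ψ ![x, y] = f (x * y)) → ρ Ψ = f) ∧
    (∀ (a : A) (Ψ Ψ' : Coch A 1),
      (∀ x y, Ψ' ![x, y] = Ψ ![x, y * a]) → ∀ x, ρ Ψ' x = ρ Ψ (x * a)) ∧
    (∀ (a : A) (Ψ Ψ' : Coch A 1),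
      (∀ x y, Ψ' ![x, y] = Ψ ![a * x, y]) → ∀ x, ρ Ψ' x = ρ Ψ (a * x))

/-- The ordered product `a₀a₁⋯aₙ` of a tuple of elements of `A`. -/
def ordProd : (n : ℕ) → (Fin (n + 1) → A) → A
  | 0, a => a 0
  | n + 1, a => ordProd n (fun i => a i.castSucc) * a (Fin.last (n + 1))

/-- The cochain `τ⁽ⁿ⁾(a₀,…,aₙ) = τ(a₀a₁⋯aₙ)` associated to `τ ∈ A*`. -/
noncomputable def trCochain (τ : A →L[ℂ] ℂ) (n : ℕ) : (Fin (n + 1) → A) → ℂ :=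
  fun a => τ (ordProd n a)

/-!
A splitting `ρ` of `π*` contracts the Hochschild complex. Applied to a cyclic cocycle `ψ` of degree
`N = 2m + 2` and summed over rotations, the contraction shows that, modulo the coboundary of a
cyclic cochain, `(N + 1)ψ` is the sum of the `N + 1` projections `E_j ψ`, where `E_j` makes a
cochain depend on the cyclically adjacent variables `j`, `j + 1` only through their product. A
cochain in which `k` such products have been formed is fixed by `k` of the `E_j`; subtracting these
and dividing by `N + 1 - k` leaves an average of cochains with `k + 1` products. After `N` rounds
`ψ` is, modulo a coboundary, an average of rotations of cochains `σ(a₀⋯a_N)`. Since its cyclic sum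
is a cocycle, alternating sums of rotations of `σ(a₀⋯a_{N+2})` cancel to make this cochain rotation
invariant, and as biflatness forces products to span a dense subspace, `σ` is a trace.
-/

namespace Coch

set_option maxSynthPendingDepth 3

section Tuples

variable {n : ℕ}

/-- Reduction modulo `n + 1` of an index of an `(n + 2)`-tuple. -/
def wrap (i : Fin (n + 2)) : Fin (n + 1) :=
  Fin.ofNat (n + 1) i

theorem wrap_castSucc (i : Fin (n + 1)) : wrap i.castSucc = i :=
  Fin.ofNat_val_eq_self i

theorem wrap_last : wrap (Fin.last (n + 1)) = 0 :=
  Fin.ofNat_self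

theorem val_wrap (i : Fin (n + 2)) : (wrap i : ℕ) = if (i : ℕ) = n + 1 then 0 else (i : ℕ) := by
  cases i using Fin.lastCases with
  | last => simp [wrap_last]
  | cast i => simp [wrap_castSucc, i.is_lt.ne]

theorem wrap_neg_succ (j : Fin (n + 1)) : wrap (-j.succ) = -j := by
  ext
  rw [val_wrap, Fin.val_neg, Fin.val_neg, Fin.val_succ]
  grind

theorem exists_eq_comp_val {X : Type*} (a : Fin (n + 1) → X) :
    ∃ u : ℕ → X, a = fun k : Fin (n + 1) => u k :=
  ⟨fun k => a (Fin.ofNat (n + 1) k), by simp⟩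

variable {R : Type*} [NonUnitalNormedRing R]

/-- The faces of a tuple, the last one being the cyclic face `(a_{n+1}a₀, a₁, …, aₙ)`. -/
def face (a : Fin (n + 2) → R) (i : Fin (n + 2)) : Fin (n + 1) → R :=
  Fin.lastCases (motive := fun _ => Fin (n + 1) → R)
    (fun k => if k = 0 then a (Fin.last (n + 1)) * a 0 else a k.castSucc) (hochFace a) i

theorem face_castSucc (a : Fin (n + 2) → R) (i : Fin (n + 1)) :
    face a i.castSucc = hochFace a i :=
  Fin.lastCases_castSucc ..

theorem face_last (a : Fin (n + 2) → R) :
    face a (Fin.last (n + 1)) =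
      fun k => if k = 0 then a (Fin.last (n + 1)) * a 0 else a k.castSucc :=
  Fin.lastCases_last ..

theorem face_comp_val (u : ℕ → R) (i : Fin (n + 2)) (k : Fin (n + 1)) :
    face (fun l => u l) i k =
      if (i : ℕ) = n + 1 ∧ (k : ℕ) = 0 then u (n + 1) * u 0
      else if (k : ℕ) < i then u k
      else if (k : ℕ) = i then u k * u (k + 1)
      else u (k + 1) := by
  cases i using Fin.lastCases with
  | last =>
    rw [face_last]
    grind
  | cast i =>
    rw [face_castSucc]
    grind [hochFace]

theorem face_face (a : Fin (n + 3) → R) {i j : Fin (n + 2)} (hij : i ≤ j) :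
    face (face a i.castSucc) j = face (face a j.succ) i := by
  obtain ⟨u, rfl⟩ := exists_eq_comp_val a
  obtain ⟨v, hv⟩ := exists_eq_comp_val (face (fun l => u l) i.castSucc)
  obtain ⟨w, hw⟩ := exists_eq_comp_val (face (fun l => u l) j.succ)
  have hv' (l : ℕ) (hl : l < n + 2) := congr_fun hv ⟨l, hl⟩
  have hw' (l : ℕ) (hl : l < n + 2) := congr_fun hw ⟨l, hl⟩
  simp only [face_comp_val, Fin.val_castSucc, Fin.val_succ] at hv' hw'
  ext k
  rw [hv, hw, face_comp_val, face_comp_val]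
  grind [mul_assoc]

theorem face_add_wrap (a : Fin (n + 2) → R) (i : Fin (n + 2)) (k : Fin (n + 1)) :
    face a i (k + wrap i) = face (fun l => a (l + i)) 0 k := by
  obtain ⟨u, rfl⟩ := exists_eq_comp_val a
  obtain ⟨v, hv⟩ := exists_eq_comp_val (fun l => u (l + i : Fin (n + 2)))
  have hv' (l : ℕ) (hl : l < n + 2) := congr_fun hv ⟨l, hl⟩
  rw [hv, face_comp_val, face_comp_val]
  simp only [Fin.val_add_eq_ite, val_wrap] at *
  grind

theorem face_zero_cons_cons (x y : R) (b : Fin n → R) :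
    face (Fin.cons x (Fin.cons y b) : Fin (n + 2) → R) 0 = Fin.cons (x * y) b := by
  rw [← Fin.castSucc_zero, face_castSucc]
  ext k
  cases k using Fin.cases <;> simp [hochFace]

theorem face_succ_castSucc_cons (x : R) (b : Fin (n + 2) → R) (i : Fin (n + 1)) :
    face (Fin.cons x b : Fin (n + 3) → R) i.castSucc.succ = Fin.cons x (face b i.castSucc) := by
  rw [Fin.succ_castSucc, face_castSucc, face_castSucc]
  ext k
  cases k using Fin.cases <;> simp [hochFace]

theorem face_last_cons_snoc (x y : R) (b : Fin n → R) :
    face (Fin.cons x (Fin.snoc b y : Fin (n + 1) → R) : Fin (n + 2) → R) (Fin.last (n + 1)) =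
      Fin.cons (y * x) b := by
  rw [face_last]
  ext k
  cases k using Fin.cases <;> simp [← Fin.succ_last]

end Tuples

section Currying

variable {G : Type*} [NormedAddCommGroup G] [NormedSpace ℂ G]

variable (A G) in
/-- Separating the first variable of a bounded multilinear map. -/
noncomputable def headCurry (n : ℕ) :
    ContinuousMultilinearMap ℂ (fun _ : Fin (n + 1) => A) G ≃ₗᵢ[ℂ]
      ContinuousMultilinearMap ℂ (fun _ : Fin n => A) (A →L[ℂ] G) :=
  (ContinuousMultilinearMap.domDomCongrₗᵢ ℂ A G (finRotate (n + 1)).symm).trans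
    (continuousMultilinearCurryRightEquiv' ℂ n A G)

theorem headCurry_apply {n : ℕ} (φ : ContinuousMultilinearMap ℂ (fun _ : Fin (n + 1) => A) G)
    (b : Fin n → A) (x : A) : headCurry A G n φ b x = φ (Fin.cons x b) := by
  change φ (fun i => (Fin.snoc b x : Fin (n + 1) → A) ((finRotate (n + 1)).symm i)) = _
  simp only [Fin.snoc_eq_cons_rotate, Equiv.apply_symm_apply]

theorem headCurry_symm_cons {n : ℕ}
    (f : ContinuousMultilinearMap ℂ (fun _ : Fin n => A) (A →L[ℂ] G)) (x : A) (b : Fin n → A) :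
    (headCurry A G n).symm f (Fin.cons x b) = f b x := by
  rw [← headCurry_apply, LinearIsometryEquiv.apply_symm_apply]

variable (A) in
/-- Bounded bilinear forms as `1`-cochains, with `Φ` read as `(x, y) ↦ Φ y x` because `headCurry`
separates the first variable first. -/
noncomputable def ofBilinear : (A →L[ℂ] A →L[ℂ] ℂ) ≃ₗᵢ[ℂ] Coch A 1 :=
  (((headCurry A ℂ 1).trans (headCurry A (A →L[ℂ] ℂ) 0)).trans
    (continuousMultilinearCurryFin0 ℂ A (A →L[ℂ] A →L[ℂ] ℂ))).symm

theorem ofBilinear_apply (Φ : A →L[ℂ] A →L[ℂ] ℂ) (x y : A) :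
    ofBilinear A Φ ![x, y] = Φ y x := by
  change (headCurry A ℂ 1).symm ((headCurry A (A →L[ℂ] ℂ) 0).symm _)
    (Fin.cons x (Fin.cons y ![])) = _
  rw [headCurry_symm_cons, headCurry_symm_cons]
  rfl

end Currying

section Rotation

variable {n : ℕ}

variable (A) in
/-- Rotation of the variables: `(rot c φ)(a₀, …, aₙ) = φ(a_c, …, aₙ, a₀, …, a_{c-1})`. -/
noncomputable def rot (c : Fin (n + 1)) : Coch A n ≃ₗᵢ[ℂ] Coch A n :=
  ContinuousMultilinearMap.domDomCongrₗᵢ ℂ A ℂ (Equiv.addRight c)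

theorem rot_apply (c : Fin (n + 1)) (φ : Coch A n) (a : Fin (n + 1) → A) :
    rot A c φ a = φ (fun k => a (k + c)) :=
  rfl

theorem rot_rot (c d : Fin (n + 1)) (φ : Coch A n) : rot A c (rot A d φ) = rot A (c + d) φ := by
  ext a
  refine congr_arg φ (funext fun k => congr_arg a ?_)
  simp only [Equiv.coe_addRight]
  abel

theorem rot_zero (φ : Coch A n) : rot A 0 φ = φ := by
  ext a
  exact congr_arg φ (funext fun k => congr_arg a (add_zero k))

end Rotation

section Cofaces

variable [IsScalarTower ℂ A A] [SMulCommClass ℂ A A] {n : ℕ}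

variable (A) in
/-- The pullback of functionals along the flipped multiplication: `f ↦ (y ↦ (x ↦ f (x * y)))`. -/
noncomputable def mulPullback : (A →L[ℂ] ℂ) →L[ℂ] (A →L[ℂ] A →L[ℂ] ℂ) :=
  (ContinuousLinearMap.compL ℂ A (A →L[ℂ] A) (A →L[ℂ] ℂ)).flip
    (ContinuousLinearMap.mul ℂ A).flip ∘L ContinuousLinearMap.compL ℂ A A ℂ

theorem mulPullback_apply (f : A →L[ℂ] ℂ) (x y : A) : mulPullback A f y x = f (x * y) :=
  rfl

variable (A) in
/-- The cochain map merging the first two variables. -/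
noncomputable def headCoface (n : ℕ) : Coch A n →ₗ[ℂ] Coch A (n + 1) :=
  (headCurry A ℂ (n + 1)).symm.toLinearEquiv.toLinearMap ∘ₗ
    (headCurry A (A →L[ℂ] ℂ) n).symm.toLinearEquiv.toLinearMap ∘ₗ
    (ContinuousLinearMap.compContinuousMultilinearMapL ℂ (fun _ : Fin n => A) (A →L[ℂ] ℂ)
      (A →L[ℂ] A →L[ℂ] ℂ) (mulPullback A)).toLinearMap ∘ₗ
    (headCurry A ℂ n).toLinearEquiv.toLinearMap

theorem headCoface_apply (φ : Coch A n) (a : Fin (n + 2) → A) :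
    headCoface A n φ a = φ (face a 0) := by
  induction a using Fin.consCases with | _ x a
  induction a using Fin.consCases with | _ y b
  rw [face_zero_cons_cons, ← headCurry_apply φ, ← mulPullback_apply]
  exact (headCurry_symm_cons _ x _).trans (DFunLike.congr_fun (headCurry_symm_cons _ y b) x)

variable (A) in
/-- The cochain map `φ ↦ φ ∘ ∂ᵢ`, where `∂ᵢ` is the `i`-th face of tuples. -/
noncomputable def coface (i : Fin (n + 2)) : Coch A n →ₗ[ℂ] Coch A (n + 1) :=
  (rot A i).toLinearEquiv.toLinearMap ∘ₗ headCoface A n ∘ₗ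
    (rot A (-wrap i)).toLinearEquiv.toLinearMap

theorem coface_apply (i : Fin (n + 2)) (φ : Coch A n) (a : Fin (n + 2) → A) :
    coface A i φ a = φ (face a i) := by
  simp [coface, rot_apply, headCoface_apply, ← face_add_wrap]

end Cofaces

section Coboundary

variable [IsScalarTower ℂ A A] [SMulCommClass ℂ A A] {n : ℕ}

theorem coface_eq_rot (i : Fin (n + 2)) (φ : Coch A n) :
    coface A i φ = rot A i (coface A 0 (rot A (-wrap i) φ)) := by
  ext a
  simp [rot_apply, coface_apply, ← face_add_wrap]

theorem rot_coface_zero (i : Fin (n + 2)) (φ : Coch A n) :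
    rot A i (coface A 0 φ) = coface A i (rot A (wrap i) φ) := by
  rw [coface_eq_rot i, rot_rot, neg_add_cancel, rot_zero]

theorem norm_coface_le (i : Fin (n + 2)) (φ : Coch A n) : ‖coface A i φ‖ ≤ ‖φ‖ := by
  rw [coface_eq_rot, LinearIsometryEquiv.norm_map, ← (rot A (-wrap i)).norm_map φ]
  refine ContinuousMultilinearMap.opNorm_le_bound (norm_nonneg _) fun a => ?_
  induction a using Fin.consCases with | _ x a
  induction a using Fin.consCases with | _ y b
  rw [coface_apply, face_zero_cons_cons]
  refine (ContinuousMultilinearMap.le_opNorm _ _).trans ?_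
  simp only [Fin.prod_univ_succ, Fin.cons_zero, Fin.cons_succ]
  rw [← mul_assoc ‖x‖]
  gcongr
  exact norm_mul_le x y

theorem coface_coface (φ : Coch A n) {i j : Fin (n + 2)} (hij : i ≤ j) :
    coface A i.castSucc (coface A j φ) = coface A j.succ (coface A i φ) := by
  ext a
  simp only [coface_apply, face_face a hij]

variable (A) in
/-- The Hochschild coboundary as a linear map on bounded cochains. -/
noncomputable def coboundary (n : ℕ) : Coch A n →ₗ[ℂ] Coch A (n + 1) :=
  ∑ i : Fin (n + 2), (-1 : ℂ) ^ (i : ℕ) • coface A i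

theorem coboundary_eq_sum (φ : Coch A n) :
    coboundary A n φ = ∑ i : Fin (n + 2), (-1 : ℂ) ^ (i : ℕ) • coface A i φ := by
  simp [coboundary]

theorem coe_coboundary (φ : Coch A n) : ⇑(coboundary A n φ) = hochDelta n φ := by
  ext a
  simp [coboundary_eq_sum, coface_apply, Fin.sum_univ_castSucc, face_castSucc, face_last,
    hochDelta, hochDelta']

theorem coface_succAbove_predAbove (φ : Coch A n) (i : Fin (n + 3)) (j : Fin (n + 2)) :
    coface A (i.succAbove j) (coface A (j.predAbove i) φ) = coface A i (coface A j φ) := by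
  rcases le_or_gt i j.castSucc with hij | hji
  · obtain ⟨i, rfl⟩ := Fin.exists_castSucc_eq.2 (hij.trans_lt (Fin.castSucc_lt_last j)).ne
    have hij' : i ≤ j := hij
    rw [Fin.succAbove_of_le_castSucc _ _ hij, Fin.predAbove_castSucc_of_le _ _ hij',
      coface_coface φ hij']
  · obtain ⟨i, rfl⟩ := Fin.exists_succ_eq.2 (Fin.ne_zero_of_lt hji)
    have hji' : j ≤ i := Fin.castSucc_lt_succ_iff.1 hji
    rw [Fin.succAbove_of_castSucc_lt _ _ hji, Fin.predAbove_succ_of_le _ _ hji',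
      coface_coface φ hji']

theorem coboundary_coboundary (φ : Coch A n) :
    coboundary A (n + 1) (coboundary A n φ) = 0 := by
  rw [coboundary_eq_sum (coboundary A n φ)]
  simp only [coboundary_eq_sum φ, map_sum, map_smul, Finset.smul_sum, smul_smul, ← pow_add]
  rw [← Fintype.sum_prod_type']
  refine Finset.sum_involution (fun p _ => (p.1.succAbove p.2, p.2.predAbove p.1)) ?_ ?_ ?_ ?_
  · rintro ⟨i, j⟩ -
    rw [coface_succAbove_predAbove, Fin.neg_one_pow_succAbove_add_predAbove, neg_smul,
      add_neg_cancel]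
  · rintro ⟨i, j⟩ - - h
    exact Fin.succAbove_ne i j (congr_arg Prod.fst h)
  · simp
  · rintro ⟨i, j⟩ -
    simp [Fin.succAbove_succAbove_predAbove, Fin.predAbove_predAbove_succAbove]

end Coboundary

section Contraction

variable {n : ℕ}

/-- The defining properties of a biflat splitting: `ρ` is an `A`-bimodule map from bounded bilinear
forms to functionals and a left inverse of the pullback along the multiplication. -/
structure IsSplitting (ρ : Coch A 1 →L[ℂ] (A →L[ℂ] ℂ)) : Prop where
  map_of_forall_eq_mul (f : A →L[ℂ] ℂ) (Ψ : Coch A 1) :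
    (∀ x y, Ψ ![x, y] = f (x * y)) → ρ Ψ = f
  map_left (a : A) (Ψ Ψ' : Coch A 1) :
    (∀ x y, Ψ' ![x, y] = Ψ ![x, y * a]) → ∀ x, ρ Ψ' x = ρ Ψ (x * a)
  map_right (a : A) (Ψ Ψ' : Coch A 1) :
    (∀ x y, Ψ' ![x, y] = Ψ ![a * x, y]) → ∀ x, ρ Ψ' x = ρ Ψ (a * x)

/-- The bilinear form in the first two variables of a cochain, the others being fixed. -/
noncomputable def slice (φ : Coch A (n + 1)) (b : Fin n → A) : Coch A 1 :=
  ofBilinear A (headCurry A (A →L[ℂ] ℂ) n (headCurry A ℂ (n + 1) φ) b)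

theorem slice_apply (φ : Coch A (n + 1)) (b : Fin n → A) (x y : A) :
    slice φ b ![x, y] = φ (Fin.cons x (Fin.cons y b)) := by
  rw [slice, ofBilinear_apply, headCurry_apply, headCurry_apply]

/-- The contraction of the Hochschild complex induced by `ρ`: it applies `ρ` to the first two
variables. -/
noncomputable def contraction (ρ : Coch A 1 →L[ℂ] (A →L[ℂ] ℂ)) (n : ℕ) :
    Coch A (n + 1) →ₗ[ℂ] Coch A n :=
  (headCurry A ℂ n).symm.toLinearEquiv.toLinearMap ∘ₗ
    (ContinuousLinearMap.compContinuousMultilinearMapL ℂ (fun _ : Fin n => A)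
      (A →L[ℂ] A →L[ℂ] ℂ) (A →L[ℂ] ℂ)
      (ρ ∘L (ofBilinear A).toContinuousLinearEquiv.toContinuousLinearMap)).toLinearMap ∘ₗ
    (headCurry A (A →L[ℂ] ℂ) n).toLinearEquiv.toLinearMap ∘ₗ
    (headCurry A ℂ (n + 1)).toLinearEquiv.toLinearMap

variable {ρ : Coch A 1 →L[ℂ] (A →L[ℂ] ℂ)}

theorem contraction_cons (φ : Coch A (n + 1)) (x : A) (b : Fin n → A) :
    contraction ρ n φ (Fin.cons x b) = ρ (slice φ b) x :=
  headCurry_symm_cons _ x b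

theorem norm_contraction_le (φ : Coch A (n + 1)) : ‖contraction ρ n φ‖ ≤ ‖ρ‖ * ‖φ‖ := by
  refine ContinuousMultilinearMap.opNorm_le_bound (by positivity) fun a => ?_
  induction a using Fin.consCases with | _ x b
  have hslice : ‖slice φ b‖ ≤ ‖φ‖ * ∏ i, ‖b i‖ := by
    rw [slice, LinearIsometryEquiv.norm_map]
    refine (ContinuousMultilinearMap.le_opNorm
      (headCurry A (A →L[ℂ] ℂ) n (headCurry A ℂ (n + 1) φ)) b).trans_eq ?_
    rw [LinearIsometryEquiv.norm_map, LinearIsometryEquiv.norm_map]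
  calc ‖contraction ρ n φ (Fin.cons x b)‖ = ‖ρ (slice φ b) x‖ := by rw [contraction_cons]
    _ ≤ ‖ρ‖ * ‖slice φ b‖ * ‖x‖ := ρ.le_opNorm₂ _ x
    _ ≤ ‖ρ‖ * (‖φ‖ * ∏ i, ‖b i‖) * ‖x‖ := by gcongr
    _ = ‖ρ‖ * ‖φ‖ * ∏ i, ‖(Fin.cons x b : Fin (n + 1) → A) i‖ := by
      simp only [Fin.prod_univ_succ, Fin.cons_zero, Fin.cons_succ]
      ring

variable [IsScalarTower ℂ A A] [SMulCommClass ℂ A A]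

theorem IsSplitting.contraction_coface_zero (hρ : IsSplitting ρ) (φ : Coch A n) :
    contraction ρ n (coface A 0 φ) = φ := by
  ext a
  induction a using Fin.consCases with | _ x b
  have hslice : ρ (slice (coface A 0 φ) b) = headCurry A ℂ n φ b :=
    hρ.map_of_forall_eq_mul _ _ fun u v => by
      rw [slice_apply, coface_apply, face_zero_cons_cons, headCurry_apply]
  rw [contraction_cons, hslice, headCurry_apply]

theorem IsSplitting.contraction_coface_one (hρ : IsSplitting ρ) (φ : Coch A (n + 1)) :
    contraction ρ (n + 1) (coface A 1 φ) = coface A 0 (contraction ρ n φ) := by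
  ext a
  induction a using Fin.consCases with | _ x a
  induction a using Fin.consCases with | _ y b
  rw [contraction_cons, coface_apply, face_zero_cons_cons, contraction_cons]
  refine hρ.map_left y _ _ (fun u v => ?_) x
  rw [slice_apply, slice_apply, coface_apply, ← Fin.succ_zero_eq_one, ← Fin.castSucc_zero,
    face_succ_castSucc_cons, Fin.castSucc_zero, face_zero_cons_cons]

theorem IsSplitting.contraction_coface_last (hρ : IsSplitting ρ) (φ : Coch A (n + 1)) :
    contraction ρ (n + 1) (coface A (Fin.last (n + 2)) φ) =
      coface A (Fin.last (n + 1)) (contraction ρ n φ) := by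
  ext a
  induction a using Fin.consCases with | _ x a
  induction a using Fin.snocCases with | _ b y
  rw [contraction_cons, coface_apply, face_last_cons_snoc, contraction_cons]
  refine hρ.map_right y _ _ (fun u v => ?_) x
  rw [slice_apply, slice_apply, coface_apply, Fin.cons_snoc_eq_snoc_cons, face_last_cons_snoc]

theorem contraction_coface_middle (φ : Coch A (n + 2)) (i : Fin (n + 1)) :
    contraction ρ (n + 2) (coface A i.castSucc.succ.succ φ) =
      coface A i.castSucc.succ (contraction ρ (n + 1) φ) := by
  ext a
  induction a using Fin.consCases with | _ x b
  have hslice : slice (coface A i.castSucc.succ.succ φ) b = slice φ (face b i.castSucc) := by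
    ext c
    rw [show c = ![c 0, c 1] from (FinVec.etaExpand_eq c).symm, slice_apply, slice_apply,
      coface_apply, Fin.succ_castSucc, face_succ_castSucc_cons, ← Fin.succ_castSucc,
      face_succ_castSucc_cons]
  rw [contraction_cons, coface_apply, face_succ_castSucc_cons, contraction_cons, hslice]

theorem IsSplitting.contraction_coface_succ (hρ : IsSplitting ρ) (φ : Coch A (n + 1))
    (i : Fin (n + 2)) :
    contraction ρ (n + 1) (coface A i.succ φ) = coface A i (contraction ρ n φ) := by
  cases i using Fin.lastCases with
  | last => exact hρ.contraction_coface_last φ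
  | cast i =>
    cases i using Fin.cases with
    | zero => exact hρ.contraction_coface_one φ
    | succ j =>
      obtain _ | n := n
      · exact j.elim0
      · exact contraction_coface_middle φ j

theorem IsSplitting.coboundary_contraction_add (hρ : IsSplitting ρ) (φ : Coch A (n + 1)) :
    coboundary A n (contraction ρ n φ) + contraction ρ (n + 1) (coboundary A (n + 1) φ) = φ := by
  rw [coboundary_eq_sum, coboundary_eq_sum φ, Fin.sum_univ_succ (n := n + 2), map_add, map_sum]
  simp [hρ.contraction_coface_zero, hρ.contraction_coface_succ, pow_succ]

end Contraction

section Cyclic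

variable {n : ℕ}

theorem neg_one_pow_mul_val_add (c d : Fin (n + 1)) :
    (-1 : ℂ) ^ (n * (c + d : Fin (n + 1)).val) = (-1) ^ (n * c.val) * (-1) ^ (n * d.val) := by
  have heven : Even (n * (n + 1)) := Nat.even_mul_succ_self n
  rw [← pow_add]
  refine neg_one_pow_congr ?_
  rw [Fin.val_add_eq_ite]
  split_ifs with h
  · obtain ⟨e, he⟩ := Nat.exists_eq_add_of_le h
    rw [← mul_add, he, Nat.add_sub_cancel_left, mul_add, Nat.even_add]
    simp only [heven, true_iff]
  · rw [mul_add]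

theorem neg_one_pow_mul_val_neg (c : Fin (n + 1)) :
    (-1 : ℂ) ^ (n * (-c).val) = (-1) ^ (n * c.val) := by
  have hmul : (-1 : ℂ) ^ (n * (-c).val) * (-1) ^ (n * c.val) = 1 := by
    rw [← neg_one_pow_mul_val_add, neg_add_cancel, Fin.val_zero, mul_zero, pow_zero]
  rw [eq_inv_of_mul_eq_one_left hmul, ← inv_pow, inv_neg_one]

variable (A) in
/-- The signed rotation of cochains; `signedRot A (-1)` is the signed cyclic shift. -/
noncomputable def signedRot (c : Fin (n + 1)) : Coch A n →ₗ[ℂ] Coch A n :=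
  (-1 : ℂ) ^ (n * c.val) • (rot A c).toLinearEquiv.toLinearMap

theorem signedRot_apply (c : Fin (n + 1)) (φ : Coch A n) :
    signedRot A c φ = (-1 : ℂ) ^ (n * c.val) • rot A c φ :=
  rfl

theorem signedRot_signedRot (c d : Fin (n + 1)) (φ : Coch A n) :
    signedRot A c (signedRot A d φ) = signedRot A (c + d) φ := by
  rw [signedRot_apply d, map_smul, signedRot_apply, signedRot_apply, rot_rot, smul_smul,
    neg_one_pow_mul_val_add, mul_comm]

theorem signedRot_zero (φ : Coch A n) : signedRot A 0 φ = φ := by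
  rw [signedRot_apply, rot_zero, Fin.val_zero, mul_zero, pow_zero, one_smul]

theorem norm_signedRot (c : Fin (n + 1)) (φ : Coch A n) : ‖signedRot A c φ‖ = ‖φ‖ := by
  rw [signedRot_apply, norm_smul, LinearIsometryEquiv.norm_map, norm_pow, norm_neg, norm_one,
    one_pow, one_mul]

theorem coe_signedRot_neg_one (φ : Coch A n) : ⇑(signedRot A (-1) φ) = cycT n φ := by
  ext a
  have hsign : (-1 : ℂ) ^ (n * n) = (-1) ^ n := neg_one_pow_congr (by simp [Nat.even_mul])
  rw [signedRot_apply, Fin.coe_neg_one, hsign]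
  simp only [smul_apply, rot_apply, cycT, smul_eq_mul, sub_eq_add_neg]

/-- Cyclic cochains, as the cochains fixed by all the signed rotations. -/
def IsCyclic (φ : Coch A n) : Prop :=
  ∀ c, signedRot A c φ = φ

theorem isCyclic_of_signedRot_one_eq {φ : Coch A n} (hφ : signedRot A 1 φ = φ) : IsCyclic φ := by
  intro c
  induction c using Fin.induction with
  | zero => exact signedRot_zero φ
  | succ c ih => rw [← Fin.coeSucc_eq_succ, ← signedRot_signedRot, hφ, ih]

theorem isCyclic_iff_cycT_eq {φ : Coch A n} : IsCyclic φ ↔ cycT n φ = φ := by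
  rw [← coe_signedRot_neg_one, DFunLike.coe_fn_eq]
  refine ⟨fun h => h (-1), fun h => isCyclic_of_signedRot_one_eq ?_⟩
  conv_lhs => rw [← h, signedRot_signedRot, add_neg_cancel, signedRot_zero]

theorem IsCyclic.add {φ ψ : Coch A n} (hφ : IsCyclic φ) (hψ : IsCyclic ψ) : IsCyclic (φ + ψ) :=
  fun c => by rw [map_add, hφ c, hψ c]

theorem IsCyclic.sub {φ ψ : Coch A n} (hφ : IsCyclic φ) (hψ : IsCyclic ψ) : IsCyclic (φ - ψ) :=
  fun c => by rw [map_sub, hφ c, hψ c]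

theorem IsCyclic.smul {φ : Coch A n} (hφ : IsCyclic φ) (r : ℝ) : IsCyclic (r • φ) :=
  fun c => by rw [LinearMap.map_smul_of_tower, hφ c]

variable (A) in
/-- The cyclic norm operator, the sum of all the signed rotations. -/
noncomputable def cyclicSum (n : ℕ) : Coch A n →ₗ[ℂ] Coch A n :=
  ∑ c, signedRot A c

theorem cyclicSum_apply (φ : Coch A n) : cyclicSum A n φ = ∑ c, signedRot A c φ := by
  simp [cyclicSum]

theorem isCyclic_cyclicSum (φ : Coch A n) : IsCyclic (cyclicSum A n φ) := fun c => by
  simp only [cyclicSum_apply, map_sum, signedRot_signedRot]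
  exact Equiv.sum_comp (Equiv.addLeft c) fun d => signedRot A d φ

theorem cyclicSum_signedRot (c : Fin (n + 1)) (φ : Coch A n) :
    cyclicSum A n (signedRot A c φ) = cyclicSum A n φ := by
  simp only [cyclicSum_apply, signedRot_signedRot]
  exact Equiv.sum_comp (Equiv.addRight c) fun d => signedRot A d φ

theorem cyclicSum_rot (c : Fin (n + 1)) (φ : Coch A n) :
    cyclicSum A n (rot A c φ) = (-1 : ℂ) ^ (n * (c : ℕ)) • cyclicSum A n φ := by
  rw [← cyclicSum_signedRot c φ, signedRot_apply, map_smul, smul_smul, ← mul_pow, neg_one_mul,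
    neg_neg, one_pow, one_smul]

theorem IsCyclic.cyclicSum_eq {φ : Coch A n} (hφ : IsCyclic φ) :
    cyclicSum A n φ = (n + 1) • φ := by
  rw [cyclicSum_apply, Finset.sum_congr rfl fun c _ => hφ c, Finset.sum_const, Finset.card_univ,
    Fintype.card_fin]

theorem norm_cyclicSum_le (φ : Coch A n) : ‖cyclicSum A n φ‖ ≤ ((n : ℝ) + 1) * ‖φ‖ := by
  rw [cyclicSum_apply]
  refine (norm_sum_le _ _).trans_eq ?_
  simp [norm_signedRot]

variable [IsScalarTower ℂ A A] [SMulCommClass ℂ A A]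

theorem neg_one_pow_smul_coface (i : Fin (n + 2)) (φ : Coch A n) :
    (-1 : ℂ) ^ (i : ℕ) • coface A i φ =
      signedRot A i (coface A 0 (signedRot A (-wrap i) φ)) := by
  have hsign : (-1 : ℂ) ^ ((n + 1) * i.val + n * (wrap i).val) = (-1) ^ (i : ℕ) := by
    refine neg_one_pow_congr ?_
    rw [val_wrap]
    split_ifs with hi <;> grind
  rw [coface_eq_rot, signedRot_apply, signedRot_apply, map_smul, map_smul, smul_smul,
    neg_one_pow_mul_val_neg, ← pow_add, hsign]

theorem coboundary_eq_sum_signedRot (φ : Coch A n) :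
    coboundary A n φ = ∑ i, signedRot A i (coface A 0 (signedRot A (-wrap i) φ)) := by
  simp only [coboundary_eq_sum, neg_one_pow_smul_coface]

theorem IsCyclic.coboundary_eq {φ : Coch A n} (hφ : IsCyclic φ) :
    coboundary A n φ = cyclicSum A (n + 1) (coface A 0 φ) := by
  rw [coboundary_eq_sum_signedRot, cyclicSum_apply]
  exact Finset.sum_congr rfl fun i _ => by rw [hφ]

theorem IsCyclic.coboundary {φ : Coch A n} (hφ : IsCyclic φ) : IsCyclic (coboundary A n φ) := by
  rw [hφ.coboundary_eq]
  exact isCyclic_cyclicSum _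

theorem cyclicSum_coboundary (φ : Coch A n) :
    cyclicSum A (n + 1) (Coch.coboundary A n φ) =
      Coch.coboundary A n (cyclicSum A n φ) + cyclicSum A (n + 1) (coface A 0 φ) := by
  have hneg : ∑ i : Fin (n + 1), signedRot A (-i) φ = cyclicSum A n φ := by
    rw [cyclicSum_apply]
    exact Equiv.sum_comp (Equiv.neg (Fin (n + 1))) fun c => signedRot A c φ
  rw [(isCyclic_cyclicSum φ).coboundary_eq, coboundary_eq_sum_signedRot, map_sum,
    Fin.sum_univ_castSucc]
  simp only [cyclicSum_signedRot, wrap_castSucc, wrap_last, neg_zero, signedRot_zero, ← map_sum,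
    hneg]

end Cyclic

section MergeProjections

variable [IsScalarTower ℂ A A] [SMulCommClass ℂ A A] {n : ℕ}

/-- The operator on cochains which uses `ρ` to replace the dependence on the adjacent variables `j`,
`j + 1` by a dependence on their product. -/
noncomputable def mergeProj (ρ : Coch A 1 →L[ℂ] (A →L[ℂ] ℂ)) (j : Fin (n + 2)) :
    Coch A (n + 1) →ₗ[ℂ] Coch A (n + 1) :=
  (rot A j).toLinearEquiv.toLinearMap ∘ₗ coface A 0 ∘ₗ contraction ρ n ∘ₗ
    (rot A (-j)).toLinearEquiv.toLinearMap

variable {ρ : Coch A 1 →L[ℂ] (A →L[ℂ] ℂ)}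

theorem mergeProj_apply (j : Fin (n + 2)) (φ : Coch A (n + 1)) :
    mergeProj ρ j φ = rot A j (coface A 0 (contraction ρ n (rot A (-j) φ))) :=
  rfl

theorem mergeProj_rot (j c : Fin (n + 2)) (φ : Coch A (n + 1)) :
    mergeProj ρ j (rot A c φ) = rot A c (mergeProj ρ (j - c) φ) := by
  rw [mergeProj_apply, mergeProj_apply, rot_rot, rot_rot, add_sub_cancel, neg_sub, sub_eq_neg_add]

theorem IsSplitting.mergeProj_zero_coface_zero (hρ : IsSplitting ρ) (φ : Coch A n) :
    mergeProj ρ 0 (coface A 0 φ) = coface A 0 φ := by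
  rw [mergeProj_apply, neg_zero, rot_zero, rot_zero, hρ.contraction_coface_zero]

theorem IsSplitting.mergeProj_succ_coface_zero (hρ : IsSplitting ρ) (j : Fin (n + 2))
    (φ : Coch A (n + 1)) :
    mergeProj ρ j.succ (coface A 0 φ) = coface A 0 (mergeProj ρ j φ) := by
  obtain ⟨i, hi⟩ := Fin.exists_succ_eq.2 (neg_ne_zero.2 j.succ_ne_zero)
  calc mergeProj ρ j.succ (coface A 0 φ)
    _ = rot A j.succ (coface A 0 (contraction ρ (n + 1) (coface A i.succ (rot A (-j) φ)))) := by
      rw [mergeProj_apply, rot_coface_zero (-j.succ), wrap_neg_succ, hi]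
    _ = rot A j.succ (coface A i.succ (coface A 0 (contraction ρ n (rot A (-j) φ)))) := by
      rw [hρ.contraction_coface_succ, ← coface_coface _ (Fin.zero_le i), Fin.castSucc_zero]
    _ = rot A j.succ (rot A (-j.succ) (coface A 0 (mergeProj ρ j φ))) := by
      rw [rot_coface_zero (-j.succ), wrap_neg_succ, mergeProj_apply, rot_rot, neg_add_cancel,
        rot_zero, hi]
    _ = coface A 0 (mergeProj ρ j φ) := by
      rw [rot_rot, add_neg_cancel, rot_zero]

theorem IsCyclic.cyclicSum_coface_contraction {z : Coch A (n + 1)} (hz : IsCyclic z) :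
    cyclicSum A (n + 1) (coface A 0 (contraction ρ n z)) = ∑ j, mergeProj ρ j z := by
  rw [cyclicSum_apply]
  refine Finset.sum_congr rfl fun j _ => ?_
  have hsq : (-1 : ℂ) ^ ((n + 1) * j.val) * (-1) ^ ((n + 1) * j.val) = 1 := by
    rw [← mul_pow, neg_one_mul, neg_neg, one_pow]
  conv_lhs => rw [← hz (-j), signedRot_apply, signedRot_apply, neg_one_pow_mul_val_neg]
  simp only [map_smul, smul_smul, hsq, one_smul, mergeProj_apply]

theorem IsSplitting.nsmul_eq_coboundary_add_sum_mergeProj (hρ : IsSplitting ρ) {z : Coch A (n + 1)}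
    (hz : IsCyclic z) (hδz : coboundary A (n + 1) z = 0) :
    (n + 2) • z =
      coboundary A n (cyclicSum A n (contraction ρ n z)) + ∑ j, mergeProj ρ j z := by
  have hsz : coboundary A n (contraction ρ n z) = z := by
    simpa only [hδz, map_zero, add_zero] using hρ.coboundary_contraction_add z
  rw [← hz.cyclicSum_coface_contraction, ← cyclicSum_coboundary, hsz, hz.cyclicSum_eq]

end MergeProjections

section Merged

variable [IsScalarTower ℂ A A] [SMulCommClass ℂ A A] {ρ : Coch A 1 →L[ℂ] (A →L[ℂ] ℂ)} {B K : ℝ}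

variable (A) in
/-- The cochains obtained from a cochain of norm at most `B` by precomposing with `k` successive
products of cyclically adjacent variables. -/
def merged (B : ℝ) : (k n : ℕ) → Set (Coch A n)
  | 0, _ => Metric.closedBall 0 B
  | _ + 1, 0 => ∅
  | k + 1, n + 1 => {φ | ∃ c, ∃ y ∈ merged B k n, rot A c (coface A 0 y) = φ}

theorem rot_coface_zero_mem_merged {k n : ℕ} {φ : Coch A n} (hφ : φ ∈ merged A B k n)
    (c : Fin (n + 2)) : rot A c (coface A 0 φ) ∈ merged A B (k + 1) (n + 1) :=
  ⟨c, φ, hφ, rfl⟩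

theorem norm_le_of_mem_merged {k n : ℕ} {φ : Coch A n} (hφ : φ ∈ merged A B k n) : ‖φ‖ ≤ B := by
  induction k generalizing n with
  | zero => exact mem_closedBall_zero_iff.1 hφ
  | succ k ih =>
    obtain _ | n := n
    · exact hφ.elim
    · obtain ⟨c, y, hy, rfl⟩ := hφ
      rw [LinearIsometryEquiv.norm_map]
      exact (norm_coface_le 0 y).trans (ih hy)

theorem norm_le_of_mem_convexHull_merged {k n : ℕ} {φ : Coch A n}
    (hφ : φ ∈ convexHull ℝ (merged A B k n)) : ‖φ‖ ≤ B := by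
  refine mem_closedBall_zero_iff.1 (convexHull_min (fun w hw => ?_) (convex_closedBall 0 B) hφ)
  exact mem_closedBall_zero_iff.2 (norm_le_of_mem_merged hw)

theorem IsSplitting.exists_finset_mergeProj_of_mem_merged (hρ : IsSplitting ρ) (hK : ‖ρ‖ ≤ K)
    {k n : ℕ} (hkn : k ≤ n) {φ : Coch A (n + 1)} (hφ : φ ∈ merged A B k (n + 1)) :
    ∃ J : Finset (Fin (n + 2)), J.card = k ∧ (∀ j ∈ J, mergeProj ρ j φ = φ) ∧
      ∀ j ∉ J, mergeProj ρ j φ ∈ merged A (K * B) (k + 1) (n + 1) := by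
  induction k generalizing n with
  | zero =>
    refine ⟨∅, Finset.card_empty, by simp, fun j _ => ?_⟩
    rw [mergeProj_apply]
    refine rot_coface_zero_mem_merged ?_ j
    refine mem_closedBall_zero_iff.2 ((norm_contraction_le _).trans ?_)
    rw [LinearIsometryEquiv.norm_map]
    exact mul_le_mul hK (norm_le_of_mem_merged hφ) (norm_nonneg φ) ((norm_nonneg ρ).trans hK)
  | succ k ih =>
    obtain ⟨n, rfl⟩ := Nat.exists_eq_add_one_of_ne_zero (Nat.ne_zero_of_lt hkn)
    obtain ⟨c, y, hy, rfl⟩ := hφ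
    obtain ⟨J, hcard, hfix, hmerge⟩ := ih (Nat.le_of_succ_le_succ hkn) hy
    refine ⟨(insert 0 (J.map (Fin.succEmb _))).map (addRightEmbedding c), ?_, ?_, ?_⟩
    · rw [Finset.card_map, Finset.card_insert_of_notMem (by simp), Finset.card_map, hcard]
    · intro j hj
      obtain ⟨i, hi, rfl⟩ := Finset.mem_map.1 hj
      rw [addRightEmbedding_apply, mergeProj_rot, add_sub_cancel_right]
      obtain rfl | hi := Finset.mem_insert.1 hi
      · rw [hρ.mergeProj_zero_coface_zero]
      · obtain ⟨l, hl, rfl⟩ := Finset.mem_map.1 hi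
        rw [Fin.coe_succEmb, hρ.mergeProj_succ_coface_zero, hfix l hl]
    · intro j hj
      obtain ⟨i, rfl⟩ : ∃ i, j = i + c := ⟨j - c, (sub_add_cancel j c).symm⟩
      rw [mergeProj_rot, add_sub_cancel_right]
      cases i using Fin.cases with
      | zero => simp at hj
      | succ i =>
        rw [hρ.mergeProj_succ_coface_zero]
        exact rot_coface_zero_mem_merged (hmerge i (by simpa using hj)) c

/-- On a cochain fixed by exactly `k` of the `n + 2` merge projections, the average of its images
under the other ones. -/
noncomputable def mergeAverage (ρ : Coch A 1 →L[ℂ] (A →L[ℂ] ℂ)) (n k : ℕ) :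
    Coch A (n + 1) →ₗ[ℝ] Coch A (n + 1) :=
  ((n : ℝ) + 2 - k)⁻¹ • (∑ j, (mergeProj ρ j).restrictScalars ℝ - (k : ℝ) • LinearMap.id)

theorem mergeAverage_apply {n k : ℕ} (φ : Coch A (n + 1)) :
    mergeAverage ρ n k φ = ((n : ℝ) + 2 - k)⁻¹ • (∑ j, mergeProj ρ j φ - (k : ℝ) • φ) := by
  simp [mergeAverage]

theorem mergeAverage_eq_sum_compl {n k : ℕ} {φ : Coch A (n + 1)} {J : Finset (Fin (n + 2))}
    (hcard : J.card = k) (hfix : ∀ j ∈ J, mergeProj ρ j φ = φ) :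
    mergeAverage ρ n k φ = ∑ j ∈ Jᶜ, ((n : ℝ) + 2 - k)⁻¹ • mergeProj ρ j φ := by
  rw [mergeAverage_apply, ← Finset.sum_add_sum_compl J, Finset.sum_congr rfl hfix,
    Finset.sum_const, hcard, ← Nat.cast_smul_eq_nsmul ℝ, add_sub_cancel_left, Finset.smul_sum]

theorem IsSplitting.mergeAverage_mem_convexHull (hρ : IsSplitting ρ) (hK : ‖ρ‖ ≤ K) {k n : ℕ}
    (hkn : k ≤ n) {z : Coch A (n + 1)} (hz : z ∈ convexHull ℝ (merged A B k (n + 1))) :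
    mergeAverage ρ n k z ∈ convexHull ℝ (merged A (K * B) (k + 1) (n + 1)) := by
  have hkn' : (k : ℝ) ≤ n := Nat.cast_le.2 hkn
  have hpos : 0 < (n : ℝ) + 2 - k := by linarith
  suffices h : merged A B k (n + 1) ⊆
      mergeAverage ρ n k ⁻¹' convexHull ℝ (merged A (K * B) (k + 1) (n + 1)) from
    convexHull_min h ((convex_convexHull ℝ _).linear_preimage _) hz
  intro φ hφ
  obtain ⟨J, hcard, hfix, hmerge⟩ := hρ.exists_finset_mergeProj_of_mem_merged hK hkn hφ
  rw [Set.mem_preimage, mergeAverage_eq_sum_compl hcard hfix]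
  refine (convex_convexHull ℝ _).sum_mem (fun _ _ => (inv_pos.2 hpos).le) ?_ fun j hj =>
    subset_convexHull ℝ _ (hmerge j (Finset.mem_compl.1 hj))
  have hcompl : ((Jᶜ.card : ℕ) : ℝ) = (n : ℝ) + 2 - k := by
    rw [Finset.card_compl, Fintype.card_fin, hcard, Nat.cast_sub (by omega)]
    push_cast
    ring
  rw [Finset.sum_const, nsmul_eq_mul, hcompl, mul_inv_cancel₀ hpos.ne']

end Merged

section Averaging

variable {ρ : Coch A 1 →L[ℂ] (A →L[ℂ] ℂ)} {B K : ℝ} {n : ℕ}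

theorem norm_inv_smul_cyclicSum_contraction_le (hK : ‖ρ‖ ≤ K) {k : ℕ} (hkn : k ≤ n)
    {z : Coch A (n + 1)} (hz : ‖z‖ ≤ B) :
    ‖((n : ℝ) + 2 - k)⁻¹ • cyclicSum A n (contraction ρ n z)‖ ≤ (n + 1) / 2 * (K * B) := by
  have hkn' : (k : ℝ) ≤ n := Nat.cast_le.2 hkn
  have hinv : ‖((n : ℝ) + 2 - k)⁻¹‖ ≤ 2⁻¹ := by
    rw [Real.norm_of_nonneg (inv_nonneg.2 (by linarith))]
    exact inv_anti₀ two_pos (by linarith)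
  calc ‖((n : ℝ) + 2 - k)⁻¹ • cyclicSum A n (contraction ρ n z)‖
    _ ≤ 2⁻¹ * ((n + 1) * (‖ρ‖ * ‖z‖)) := by
      rw [norm_smul]
      gcongr
      exact (norm_cyclicSum_le _).trans (by gcongr; exact norm_contraction_le z)
    _ ≤ 2⁻¹ * ((n + 1) * (K * B)) := by
      gcongr
      exact (norm_nonneg ρ).trans hK
    _ = (n + 1) / 2 * (K * B) := by ring

variable [IsScalarTower ℂ A A] [SMulCommClass ℂ A A]

theorem IsSplitting.eq_mergeAverage_add_coboundary (hρ : IsSplitting ρ) {k : ℕ} (hkn : k ≤ n)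
    {z : Coch A (n + 1)} (hz : IsCyclic z) (hδz : coboundary A (n + 1) z = 0) :
    z = mergeAverage ρ n k z +
      coboundary A n (((n : ℝ) + 2 - k)⁻¹ • cyclicSum A n (contraction ρ n z)) := by
  have hkn' : (k : ℝ) ≤ n := Nat.cast_le.2 hkn
  have hne : (n : ℝ) + 2 - k ≠ 0 := by linarith
  have hsum : ∑ j, mergeProj ρ j z - (k : ℝ) • z +
      coboundary A n (cyclicSum A n (contraction ρ n z)) = ((n : ℝ) + 2 - k) • z := by
    have h := hρ.nsmul_eq_coboundary_add_sum_mergeProj hz hδz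
    rw [← Nat.cast_smul_eq_nsmul ℝ, Nat.cast_add, Nat.cast_two] at h
    rw [sub_smul, h]
    abel
  rw [LinearMap.map_smul_of_tower, mergeAverage_apply, ← smul_add, hsum, inv_smul_smul₀ hne]

theorem isCyclic_and_coboundary_eq_zero_of_eq_add {ψ z : Coch A (n + 1)} {χ : Coch A n}
    (hψ : IsCyclic ψ) (hδψ : coboundary A (n + 1) ψ = 0) (hχ : IsCyclic χ)
    (hψz : ψ = z + coboundary A n χ) : IsCyclic z ∧ coboundary A (n + 1) z = 0 := by
  obtain rfl : z = ψ - coboundary A n χ := eq_sub_of_add_eq hψz.symm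
  exact ⟨hψ.sub hχ.coboundary, by rw [map_sub, hδψ, coboundary_coboundary, sub_zero]⟩

theorem IsSplitting.exists_mem_convexHull_merged_add_coboundary (hρ : IsSplitting ρ)
    (hρK : ‖ρ‖ ≤ K) (hK : 1 ≤ K) {ψ : Coch A (n + 1)} (hψ : IsCyclic ψ)
    (hδψ : coboundary A (n + 1) ψ = 0) {k : ℕ} (hkn : k ≤ n + 1) :
    ∃ (z : Coch A (n + 1)) (χ : Coch A n),
      z ∈ convexHull ℝ (merged A (K ^ k * ‖ψ‖) k (n + 1)) ∧ IsCyclic χ ∧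
        ψ = z + coboundary A n χ ∧ ‖χ‖ ≤ k * ((n + 1) / 2 * (K ^ (n + 1) * ‖ψ‖)) := by
  induction k with
  | zero =>
    refine ⟨ψ, 0, subset_convexHull ℝ _ ?_, fun c => map_zero _, by simp, by simp⟩
    exact mem_closedBall_zero_iff.2 (by simp)
  | succ k ih =>
    obtain ⟨z, χ, hz, hχ, hψz, hnorm⟩ := ih (by omega)
    obtain ⟨hzc, hδz⟩ := isCyclic_and_coboundary_eq_zero_of_eq_add hψ hδψ hχ hψz
    have hkn' : k ≤ n := by omega
    refine ⟨mergeAverage ρ n k z,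
      ((n : ℝ) + 2 - k)⁻¹ • cyclicSum A n (contraction ρ n z) + χ, ?_,
      ((isCyclic_cyclicSum _).smul _).add hχ, ?_, ?_⟩
    · rw [pow_succ', mul_assoc]
      exact hρ.mergeAverage_mem_convexHull hρK hkn' hz
    · rw [map_add, ← add_assoc, ← hρ.eq_mergeAverage_add_coboundary hkn' hzc hδz, hψz]
    · have hstep : ‖((n : ℝ) + 2 - k)⁻¹ • cyclicSum A n (contraction ρ n z)‖ ≤
          (n + 1) / 2 * (K ^ (n + 1) * ‖ψ‖) := by
        refine (norm_inv_smul_cyclicSum_contraction_le hρK hkn'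
          (norm_le_of_mem_convexHull_merged hz)).trans ?_
        rw [← mul_assoc K, ← pow_succ']
        gcongr
      refine (norm_add_le_of_le hstep hnorm).trans_eq ?_
      push_cast
      ring

end Averaging

section ProductCochains

theorem ordProd_hochFace {R : Type*} [NonUnitalNormedRing R] {n : ℕ} (a : Fin (n + 2) → R)
    (j : Fin (n + 1)) : ordProd n (hochFace a j) = ordProd (n + 1) a := by
  induction n with
  | zero => simp [Fin.fin_one_eq_zero j, ordProd, hochFace]
  | succ n ih =>
    cases j using Fin.lastCases with
    | last =>
      have hinit : (fun i : Fin (n + 1) => hochFace a (Fin.last (n + 1)) i.castSucc) =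
          fun i => a i.castSucc.castSucc := by
        ext i
        exact if_pos i.is_lt
      rw [ordProd, hinit]
      simp [hochFace, ordProd, mul_assoc]
    | cast j =>
      have hlast : hochFace a j.castSucc (Fin.last (n + 1)) = a (Fin.last (n + 2)) := by
        simp [hochFace, j.is_lt.not_gt, j.is_lt.ne']
      rw [ordProd, hlast]
      exact congr_arg (· * a (Fin.last (n + 2))) (ih (fun i => a i.castSucc) j)

theorem ordProd_snoc {R : Type*} [NonUnitalNormedRing R] {n : ℕ} (b : Fin (n + 1) → R) (x : R) :
    ordProd (n + 1) (Fin.snoc b x) = ordProd n b * x := by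
  simp [ordProd]

theorem ordProd_cons {R : Type*} [NonUnitalNormedRing R] {n : ℕ} (x : R) (b : Fin (n + 1) → R) :
    ordProd (n + 1) (Fin.cons x b) = x * ordProd n b := by
  induction n with
  | zero => rfl
  | succ n ih =>
    rw [← Fin.snoc_init_self b, Fin.cons_snoc_eq_snoc_cons, ordProd_snoc, ordProd_snoc, ih,
      mul_assoc]

variable [IsScalarTower ℂ A A] [SMulCommClass ℂ A A] {n : ℕ}

variable (A) in
/-- The bounded cochain `σ⁽ⁿ⁾(a₀, …, aₙ) = σ(a₀a₁⋯aₙ)`, as a linear function of `σ ∈ A*`. -/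
noncomputable def prodCochain : (n : ℕ) → (A →L[ℂ] ℂ) →ₗ[ℂ] Coch A n
  | 0 => (ContinuousMultilinearMap.ofSubsingletonₗᵢ ℂ A (0 : Fin 1)).toLinearEquiv.toLinearMap
  | n + 1 => coface A 0 ∘ₗ prodCochain n

theorem prodCochain_succ (σ : A →L[ℂ] ℂ) :
    prodCochain A (n + 1) σ = coface A 0 (prodCochain A n σ) :=
  rfl

theorem prodCochain_apply (σ : A →L[ℂ] ℂ) (a : Fin (n + 1) → A) :
    prodCochain A n σ a = σ (ordProd n a) := by
  induction n with
  | zero => rfl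
  | succ n ih =>
    rw [prodCochain_succ, coface_apply, ih, ← Fin.castSucc_zero, face_castSucc, ordProd_hochFace]

theorem coface_castSucc_prodCochain (i : Fin (n + 1)) (σ : A →L[ℂ] ℂ) :
    coface A i.castSucc (prodCochain A n σ) = prodCochain A (n + 1) σ := by
  ext a
  rw [coface_apply, prodCochain_apply, prodCochain_apply, face_castSucc, ordProd_hochFace]

theorem coface_zero_rot_neg_prodCochain (c : Fin (n + 1)) (σ : A →L[ℂ] ℂ) :
    coface A 0 (rot A (-c) (prodCochain A n σ)) =
      rot A (-c.castSucc) (prodCochain A (n + 1) σ) := by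
  rw [← coface_castSucc_prodCochain c, coface_eq_rot c.castSucc, wrap_castSucc, rot_rot,
    neg_add_cancel, rot_zero]

theorem coface_zero_cyclicSum_prodCochain (σ : A →L[ℂ] ℂ) :
    coface A 0 (cyclicSum A n (prodCochain A n σ)) =
      ∑ c : Fin (n + 1),
        (-1 : ℂ) ^ (n * (c : ℕ)) • rot A (-c.castSucc) (prodCochain A (n + 1) σ) := by
  rw [cyclicSum_apply, ← Equiv.sum_comp (Equiv.neg _), map_sum]
  refine Finset.sum_congr rfl fun c _ => ?_
  rw [Equiv.neg_apply, signedRot_apply, neg_one_pow_mul_val_neg, map_smul,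
    coface_zero_rot_neg_prodCochain]

theorem coboundary_cyclicSum_prodCochain (hn : Even n) (σ : A →L[ℂ] ℂ) :
    coboundary A n (cyclicSum A n (prodCochain A n σ)) =
      cyclicSum A (n + 1) (prodCochain A (n + 1) σ) := by
  have hsign (c : Fin (n + 1)) : (-1 : ℂ) ^ ((n + 1) * (-c.castSucc).val) = (-1) ^ (c : ℕ) := by
    rw [neg_one_pow_mul_val_neg, pow_mul, hn.add_one.neg_one_pow, Fin.val_castSucc]
  have hsum : ∑ c : Fin (n + 1), (-1 : ℂ) ^ (c : ℕ) = 1 := by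
    rw [Fin.sum_univ_eq_sum_range (fun i => (-1 : ℂ) ^ i), neg_one_geom_sum,
      if_neg (Nat.not_even_iff_odd.2 hn.add_one)]
  rw [(isCyclic_cyclicSum _).coboundary_eq, coface_zero_cyclicSum_prodCochain, map_sum]
  simp only [pow_mul, hn.neg_one_pow, one_pow, one_smul]
  simp only [cyclicSum_rot, hsign, ← Finset.sum_smul, hsum, one_smul]

theorem rot_one_prodCochain_of_cyclicSum_eq_zero (hn : Odd n) {σ : A →L[ℂ] ℂ}
    (hσ : cyclicSum A n (prodCochain A n σ) = 0) :
    rot A 1 (prodCochain A (n + 1) σ) = prodCochain A (n + 1) σ := by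
  set T := prodCochain A (n + 1) σ with hT
  have halt : ∑ c : Fin (n + 1), (-1 : ℂ) ^ (c : ℕ) • rot A (-c.castSucc) T = 0 := by
    rw [← map_zero (coface A 0), ← hσ, coface_zero_cyclicSum_prodCochain]
    simp only [pow_mul, hn.neg_one_pow, hT]
  have halt' : ∑ c : Fin (n + 1), (-1 : ℂ) ^ (c : ℕ) • rot A (1 - c.castSucc) T = 0 := by
    simpa only [map_sum, map_smul, rot_rot, map_zero, ← sub_eq_add_neg] using
      congr_arg (rot A 1) halt
  have hshift (j : Fin n) : (1 : Fin (n + 2)) - j.succ.castSucc = -j.castSucc.castSucc := by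
    rw [← Fin.succ_castSucc, ← Fin.coeSucc_eq_succ, sub_add_cancel_right]
  -- Adding the alternating sum to its rotation cancels all but one end term of each.
  rw [Fin.sum_univ_castSucc] at halt
  rw [Fin.sum_univ_succ] at halt'
  simp only [hshift, Fin.val_succ, pow_succ, mul_neg_one, neg_smul, Finset.sum_neg_distrib,
    Fin.val_zero, pow_zero, one_smul, Fin.castSucc_zero, sub_zero, Fin.val_last,
    hn.neg_one_pow, Fin.val_castSucc] at halt halt'
  have hrot : rot A 1 T = rot A (-(Fin.last n).castSucc) T := by
    rw [← sub_eq_zero, sub_eq_add_neg, ← add_zero (0 : Coch A (n + 1))]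
    nth_rw 1 [← halt', ← halt]
    abel
  have hlast : (-1 : Fin (n + 2)) + -(Fin.last n).castSucc = 1 := by
    rw [← neg_add_rev, Fin.coeSucc_eq_succ, Fin.succ_last]
    exact neg_eq_of_add_eq_zero_right (Fin.last_add_one _)
  calc rot A 1 T = rot A (-1) (rot A (-(Fin.last n).castSucc) T) := by rw [rot_rot, hlast]
    _ = T := by rw [← hrot, rot_rot, neg_add_cancel, rot_zero]

theorem rot_one_prodCochain_cons (σ : A →L[ℂ] ℂ) (x : A) (b : Fin (n + 1) → A) :
    rot A 1 (prodCochain A (n + 1) σ) (Fin.cons x b) = σ (ordProd n b * x) := by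
  rw [rot_apply, prodCochain_apply, ← ordProd_snoc, Fin.snoc_eq_cons_rotate]
  simp only [finRotate_apply]

theorem isCyclic_prodCochain (hn : Even n) {τ : A →L[ℂ] ℂ} (hτ : ∀ a b, τ (a * b) = τ (b * a)) :
    IsCyclic (prodCochain A n τ) := by
  refine isCyclic_of_signedRot_one_eq ?_
  rw [signedRot_apply, pow_mul, hn.neg_one_pow, one_pow, one_smul]
  cases n with
  | zero => exact rot_zero _
  | succ n =>
    ext a
    induction a using Fin.consCases with | _ x b
    rw [rot_one_prodCochain_cons, prodCochain_apply, ordProd_cons, hτ]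

end ProductCochains

section Traces

variable [IsScalarTower ℂ A A] [SMulCommClass ℂ A A] {ρ : Coch A 1 →L[ℂ] (A →L[ℂ] ℂ)} {n : ℕ}

theorem IsSplitting.eq_zero_of_forall_ordProd (hρ : IsSplitting ρ) {f : A →L[ℂ] ℂ}
    (hf : ∀ b : Fin (n + 1) → A, f (ordProd n b) = 0) : f = 0 := by
  induction n generalizing f with
  | zero =>
    ext x
    exact hf fun _ => x
  | succ n ih =>
    have hmul (y : A) : f ∘L (ContinuousLinearMap.mul ℂ A).flip y = 0 :=
      ih fun b => (congr_arg f (ordProd_snoc b y)).symm.trans (hf (Fin.snoc b y))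
    rw [← hρ.map_of_forall_eq_mul f 0 fun x y => (DFunLike.congr_fun (hmul y) x).symm, map_zero]

theorem IsSplitting.map_mul_comm_of_rot_one_eq (hρ : IsSplitting ρ) {σ : A →L[ℂ] ℂ}
    (hσ : rot A 1 (prodCochain A (n + 1) σ) = prodCochain A (n + 1) σ) (x y : A) :
    σ (x * y) = σ (y * x) := by
  have hzero : σ ∘L (ContinuousLinearMap.mul ℂ A x - (ContinuousLinearMap.mul ℂ A).flip x) = 0 := by
    refine hρ.eq_zero_of_forall_ordProd (n := n) fun b => ?_
    have h := DFunLike.congr_fun hσ (Fin.cons x b)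
    rw [rot_one_prodCochain_cons, prodCochain_apply, ordProd_cons] at h
    simp [h]
  exact sub_eq_zero.1 ((map_sub σ _ _).symm.trans (DFunLike.congr_fun hzero y))

theorem IsSplitting.map_mul_comm_of_coboundary_cyclicSum_eq_zero (hρ : IsSplitting ρ)
    (hn : Even n) {σ : A →L[ℂ] ℂ}
    (hσ : coboundary A n (cyclicSum A n (prodCochain A n σ)) = 0) (x y : A) :
    σ (x * y) = σ (y * x) := by
  rw [coboundary_cyclicSum_prodCochain hn] at hσ
  exact hρ.map_mul_comm_of_rot_one_eq (rot_one_prodCochain_of_cyclicSum_eq_zero hn.add_one hσ) x y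

theorem exists_eq_rot_prodCochain_of_mem_merged {B : ℝ} {w : Coch A n} (hw : w ∈ merged A B n n) :
    ∃ (c : Fin (n + 1)) (σ : A →L[ℂ] ℂ), ‖σ‖ ≤ B ∧ w = rot A c (prodCochain A n σ) := by
  induction n with
  | zero =>
    let e := ContinuousMultilinearMap.ofSubsingletonₗᵢ (G' := ℂ) ℂ A (0 : Fin 1)
    refine ⟨0, e.symm w, ?_, ?_⟩
    · rw [LinearIsometryEquiv.norm_map]
      exact norm_le_of_mem_merged hw
    · rw [rot_zero]
      exact (e.apply_symm_apply w).symm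
  | succ n ih =>
    obtain ⟨c, y, hy, rfl⟩ := hw
    obtain ⟨d, σ, hσ, rfl⟩ := ih hy
    refine ⟨c + -(-d).castSucc, σ, hσ, ?_⟩
    rw [← rot_rot, ← coface_zero_rot_neg_prodCochain, neg_neg]

theorem exists_cyclicSum_eq_of_mem_convexHull_merged {B : ℝ} {z : Coch A n}
    (hz : z ∈ convexHull ℝ (merged A B n n)) :
    ∃ σ : A →L[ℂ] ℂ, ‖σ‖ ≤ B ∧ cyclicSum A n (prodCochain A n σ) = cyclicSum A n z := by
  let N := (cyclicSum A n).restrictScalars ℝ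
  let P := (cyclicSum A n ∘ₗ prodCochain A n).restrictScalars ℝ
  suffices hsub : merged A B n n ⊆ N ⁻¹' (P '' Metric.closedBall 0 B) by
    obtain ⟨σ, hσ, heq⟩ :=
      convexHull_min hsub (((convex_closedBall 0 B).linear_image P).linear_preimage N) hz
    exact ⟨σ, mem_closedBall_zero_iff.1 hσ, heq⟩
  intro w hw
  obtain ⟨c, σ, hσ, rfl⟩ := exists_eq_rot_prodCochain_of_mem_merged hw
  refine ⟨(-1 : ℂ) ^ (n * (c : ℕ)) • σ, mem_closedBall_zero_iff.2 ?_, ?_⟩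
  · rwa [norm_smul, norm_pow, norm_neg, norm_one, one_pow, one_mul]
  · exact (map_smul (cyclicSum A n ∘ₗ prodCochain A n) _ σ).trans (cyclicSum_rot c _).symm

theorem IsSplitting.exists_eq_prodCochain_of_mem_convexHull_merged (hρ : IsSplitting ρ)
    (hn : Even n) {B : ℝ} {z : Coch A n} (hz : IsCyclic z) (hδz : coboundary A n z = 0)
    (hmem : z ∈ convexHull ℝ (merged A B n n)) :
    ∃ τ : A →L[ℂ] ℂ, (∀ a b, τ (a * b) = τ (b * a)) ∧ ‖τ‖ ≤ B ∧ z = prodCochain A n τ := by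
  obtain ⟨τ, hnorm, hτz⟩ := exists_cyclicSum_eq_of_mem_convexHull_merged hmem
  rw [hz.cyclicSum_eq] at hτz
  have htrace : ∀ a b, τ (a * b) = τ (b * a) :=
    hρ.map_mul_comm_of_coboundary_cyclicSum_eq_zero hn (by rw [hτz, map_nsmul, hδz, nsmul_zero])
  rw [(isCyclic_prodCochain hn htrace).cyclicSum_eq, ← Nat.cast_smul_eq_nsmul ℂ,
    ← Nat.cast_smul_eq_nsmul ℂ] at hτz
  exact ⟨τ, htrace, hnorm, (smul_right_injective _ (Nat.cast_ne_zero.2 n.succ_ne_zero) hτz).symm⟩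

end Traces

end Coch

theorem biflat_even_cyclic_cocycle_trace_plus_coboundary_quantitative_general
    {A : Type*} [NonUnitalNormedRing A] [NormedSpace ℂ A]
    [IsScalarTower ℂ A A] [SMulCommClass ℂ A A]
    (K : ℝ) (hK : 1 ≤ K) (hbf : IsBiflat A K) (m : ℕ)
    (ψ : Coch A (2 * m + 2))
    (hcyc : cycT (2 * m + 2) ⇑ψ = ⇑ψ)
    (hcocycle : hochDelta (2 * m + 2) ⇑ψ = 0) :
    ∃ (χ : Coch A (2 * m + 1)) (τ : A →L[ℂ] ℂ),
      cycT (2 * m + 1) ⇑χ = ⇑χ ∧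
      (∀ a b : A, τ (a * b) = τ (b * a)) ∧
      ⇑ψ = trCochain τ (2 * m + 2) + hochDelta (2 * m + 1) ⇑χ ∧
      ‖τ‖ ≤ K ^ (2 * m + 2) * ‖ψ‖ ∧
      ‖χ‖ ≤ 2 * ((m : ℝ) + 1) ^ 2 * K ^ (2 * m + 2) * ‖ψ‖ := by
  obtain ⟨ρ, hρK, hπ, hleft, hright⟩ := hbf
  have hρ : Coch.IsSplitting ρ := ⟨hπ, hleft, hright⟩
  have hψ : Coch.IsCyclic ψ := Coch.isCyclic_iff_cycT_eq.2 hcyc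
  have hδψ : Coch.coboundary A _ ψ = 0 :=
    DFunLike.coe_injective ((Coch.coe_coboundary ψ).trans hcocycle)
  obtain ⟨z, χ, hmem, hχ, hψz, hχnorm⟩ :=
    hρ.exists_mem_convexHull_merged_add_coboundary hρK hK hψ hδψ le_rfl
  obtain ⟨hz, hδz⟩ := Coch.isCyclic_and_coboundary_eq_zero_of_eq_add hψ hδψ hχ hψz
  obtain ⟨τ, hτ, hτnorm, rfl⟩ :=
    hρ.exists_eq_prodCochain_of_mem_convexHull_merged ((even_two_mul m).add even_two) hz hδz hmem
  refine ⟨χ, τ, Coch.isCyclic_iff_cycT_eq.1 hχ, hτ, ?_, hτnorm, hχnorm.trans_eq ?_⟩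
  · rw [← Coch.coe_coboundary]
    ext a
    rw [hψz, add_apply, Coch.prodCochain_apply]
    rfl
  · push_cast
    ring

/-- If `A` is a complex Banach algebra which is biflat with
constant `K ≥ 1`, then every cyclic `(2m+2)`-cocycle `ψ` has the form
`τ^(2m+2) + δχ` for a trace `τ` and a cyclic cochain `χ`, with
`‖τ‖ ≤ K^{2m+2}‖ψ‖` and `‖χ‖ ≤ 2(m+1)³K^{4m+2}‖ψ‖`. -/
theorem biflat_even_cyclic_cocycle_trace_plus_coboundary_quantitative
    {A : Type*} [NonUnitalNormedRing A] [NormedSpace ℂ A]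
    [IsScalarTower ℂ A A] [SMulCommClass ℂ A A] [CompleteSpace A]
    (K : ℝ) (hK : 1 ≤ K) (hbf : IsBiflat A K) (m : ℕ)
    (ψ : Coch A (2 * m + 2))
    (hcyc : cycT (2 * m + 2) ⇑ψ = ⇑ψ)
    (hcocycle : hochDelta (2 * m + 2) ⇑ψ = 0) :
    ∃ (χ : Coch A (2 * m + 1)) (τ : A →L[ℂ] ℂ),
      cycT (2 * m + 1) ⇑χ = ⇑χ ∧
      (∀ a b : A, τ (a * b) = τ (b * a)) ∧
      ⇑ψ = trCochain τ (2 * m + 2) + hochDelta (2 * m + 1) ⇑χ ∧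
      ‖τ‖ ≤ K ^ (2 * m + 2) * ‖ψ‖ ∧
      ‖χ‖ ≤ 2 * ((m : ℝ) + 1) ^ 3 * K ^ (4 * m + 2) * ‖ψ‖ := by
  obtain ⟨χ, τ, hχ, hτ, hψ, hτnorm, hχnorm⟩ :=
    biflat_even_cyclic_cocycle_trace_plus_coboundary_quantitative_general K hK hbf m ψ hcyc hcocycle
  refine ⟨χ, τ, hχ, hτ, hψ, hτnorm, hχnorm.trans ?_⟩
  gcongr
  · linarith [(m.cast_nonneg : (0 : ℝ) ≤ m)]
  · norm_num
  · norm_num
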